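/- Let R be a commutative noetherian ring, M a finitely generated d-torsionfree R-module with R ∈ add M, and X a finitely generated R-module with grade_R X > c for some 0 ≤ c < d. Let A = End_R(M ⊕ Ω^c X) and let e ∈ A be the idempotent projecting onto the summand M. Then the quotient ring A/AeA is isomorphic to End_R(X). -/

import Mathlib

open CategoryTheory
universe u
noncomputable section

/-- A linear map factors through a projective module. -/
def FactorsThroughProjective {R : Type u} [Ring R] {M N : Type u}
    [AddCommGroup M] [AddCommGroup N] [Module R M] [Module R N] (f : M →ₗ[R] N) : Prop :=
  ∃ (P : Type u) (_ : AddCommGroup P) (_ : Module R P), Module.Projective R P ∧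
    ∃ (g : M →ₗ[R] P) (h : P →ₗ[R] N), h.comp g = f

/-- `Ext^i_R(X, Y) = 0`. -/
def extZero (R : Type u) [CommRing R] (i : ℕ) (X Y : ModuleCat.{u} R) : Prop :=
  Subsingleton (((Ext R (ModuleCat.{u} R) i).obj (Opposite.op X)).obj Y)

/-- `Y` is an `n`-th syzygy of `N` (via finitely generated projective modules). -/
def IsSyzygy (R : Type u) [CommRing R] : ℕ → ModuleCat.{u} R → ModuleCat.{u} R → Prop
  | 0, Y, N => Nonempty (Y ≅ N)
  | n+1, Y, N => ∃ (P K : ModuleCat.{u} R) (i : Y ⟶ P) (p : P ⟶ K),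
      Projective P ∧ Module.Finite R P ∧ Function.Injective i ∧ Function.Surjective p ∧
      Function.Exact i p ∧ IsSyzygy R n K N

/-- projective dimension at most `n` -/
def pdLE (A : Type u) [Ring A] : ℕ → ModuleCat.{u} A → Prop
  | 0, M => Projective M
  | n+1, M => Projective M ∨ ∃ (K P : ModuleCat.{u} A) (i : K ⟶ P) (p : P ⟶ M),
      Projective P ∧ Function.Injective i ∧ Function.Surjective p ∧
      Function.Exact i p ∧ pdLE A n K

/-- global dimension at most `n` -/
def gldimLE (A : Type u) [Ring A] (n : ℕ) : Prop := ∀ M : ModuleCat.{u} A, pdLE A n M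

/-- `M` is `d`-torsionfree: it is a `d`-th syzygy of a finitely generated module `N`
with `Ext^i(N,R) = 0` for `1 ≤ i ≤ d`. -/
def IsTorsionFree (R : Type u) [CommRing R] (d : ℕ) (M : ModuleCat.{u} R) : Prop :=
  ∃ N : ModuleCat.{u} R, Module.Finite R N ∧
    (∀ i, 1 ≤ i → i ≤ d → extZero R i N (ModuleCat.of R R)) ∧ IsSyzygy R d M N

/-- `N` lies in `add M`: it is a direct summand of a finite direct sum of copies of `M`. -/
def MemAdd (R : Type u) [CommRing R] (M N : ModuleCat.{u} R) : Prop :=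
  ∃ (k : ℕ) (i : N →ₗ[R] (Fin k → M)) (p : (Fin k → M) →ₗ[R] N), p.comp i = LinearMap.id

/-- The left `A`-module structure on the quotient of `A` by a two-sided ideal. -/
def quotSpanModule (A : Type u) [Ring A] (I : TwoSidedIdeal A) :
    Module A I.ringCon.Quotient :=
  Module.compHom _ I.ringCon.mk'

/-!
Write `W = Ω^c X` and let `[add T]` be the ideal of maps that factor through `add T`. As `e`
projects onto the retract `M`, the ideal `AeA` is `[add M]`, and `M ⊕ W ≅ W` modulo `[add M]`, so
`A/AeA ≅ End(W)/[add M]`. Since `R ∈ add M`, this is the stable ring `End(W)/[add R]` once every map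
`W → M` factors through `add R`. For that, compare the first `c` steps of the resolution of `X` with
those of the `d`-th syzygy `M`: what is left at the end is a map from `X` to a syzygy, and it
vanishes because `Hom(X, R) = 0` and `c < d`. Passing from a syzygy `Ω^{n+1} X` to `Ω^n X` does not
change the stable endomorphism ring, because `Ext^{n+1}(X, R) = 0` lets maps `Ω^{n+1} X → R` extend
over the projective term. Finally `Hom(X, R) = 0` makes `[add R](X, X)` zero.
-/

section HomThroughAdd

variable {R T L M N W P K Q ι : Type*} [Ring R]
  [AddCommGroup T] [AddCommGroup L] [AddCommGroup M] [AddCommGroup N]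
  [AddCommGroup W] [AddCommGroup P] [AddCommGroup K] [AddCommGroup Q]
  [Module R T] [Module R L] [Module R M] [Module R N]
  [Module R W] [Module R P] [Module R K] [Module R Q]

variable (R T M N) in
/-- The subgroup `[add T](M, N)` of linear maps `M → N` that factor through a module in `add T`,
encoded as finite sums of composites `M → T → N`. Accordingly, `N ∈ add T` is expressed as
`LinearMap.id ∈ homThroughAdd R T N N`. -/
def homThroughAdd : AddSubgroup (M →ₗ[R] N) :=
  AddSubgroup.closure {f | ∃ (g : M →ₗ[R] T) (h : T →ₗ[R] N), h ∘ₗ g = f}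

theorem comp_mem_homThroughAdd (g : M →ₗ[R] T) (h : T →ₗ[R] N) :
    h ∘ₗ g ∈ homThroughAdd R T M N :=
  AddSubgroup.subset_closure ⟨g, h, rfl⟩

theorem homThroughAdd_le_iff {S : AddSubgroup (M →ₗ[R] N)} :
    homThroughAdd R T M N ≤ S ↔ ∀ (g : M →ₗ[R] T) (h : T →ₗ[R] N), h ∘ₗ g ∈ S :=
  (AddSubgroup.closure_le S).trans
    ⟨fun H g h => H ⟨g, h, rfl⟩, by rintro H _ ⟨g, h, rfl⟩; exact H g h⟩

namespace homThroughAdd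

theorem comp_left {f : M →ₗ[R] N} (hf : f ∈ homThroughAdd R T M N) (k : N →ₗ[R] L) :
    k ∘ₗ f ∈ homThroughAdd R T M L :=
  have h_le : homThroughAdd R T M N ≤
      (homThroughAdd R T M L).comap (LinearMap.compRight ℤ k).toAddMonoidHom :=
    homThroughAdd_le_iff.2 fun g h => comp_mem_homThroughAdd g (k ∘ₗ h)
  h_le hf

theorem comp_right {f : M →ₗ[R] N} (hf : f ∈ homThroughAdd R T M N) (k : L →ₗ[R] M) :
    f ∘ₗ k ∈ homThroughAdd R T L N :=
  have h_le : homThroughAdd R T M N ≤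
      (homThroughAdd R T L N).comap (LinearMap.lcomp ℤ N k).toAddMonoidHom :=
    homThroughAdd_le_iff.2 fun g h => comp_mem_homThroughAdd (g ∘ₗ k) h
  h_le hf

theorem mem_of_id_mem_cod (hN : LinearMap.id ∈ homThroughAdd R T N N) (f : M →ₗ[R] N) :
    f ∈ homThroughAdd R T M N :=
  comp_right hN f

theorem comp_mem_of_id_mem (hL : LinearMap.id ∈ homThroughAdd R T L L)
    (g : M →ₗ[R] L) (h : L →ₗ[R] N) : h ∘ₗ g ∈ homThroughAdd R T M N :=
  comp_left (mem_of_id_mem_cod hL g) h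

theorem comp_pi_mem [Finite ι] (g : M →ₗ[R] ι → T) (h : (ι → T) →ₗ[R] N) :
    h ∘ₗ g ∈ homThroughAdd R T M N := by
  classical
  have := Fintype.ofFinite ι
  have h_sum : h ∘ₗ g = ∑ j, (h ∘ₗ LinearMap.single R (fun _ => T) j) ∘ₗ LinearMap.proj j ∘ₗ g := by
    ext x
    simp only [LinearMap.sum_apply, LinearMap.comp_apply, LinearMap.proj_apply, ← map_sum,
      LinearMap.single_apply, LinearMap.sum_single_apply]
  rw [h_sum]
  exact sum_mem fun j _ => comp_mem_homThroughAdd _ _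

theorem id_mem_of_projective [Module.Projective R P] [Module.Finite R P] :
    LinearMap.id ∈ homThroughAdd R R P P := by
  obtain ⟨n, h, g, -, -, h_id⟩ := Module.Finite.exists_comp_eq_id_of_projective R P
  exact h_id ▸ comp_pi_mem g h

theorem le_of_forall_mem (H : ∀ g : M →ₗ[R] T, g ∈ homThroughAdd R L M T) :
    homThroughAdd R T M N ≤ homThroughAdd R L M N :=
  homThroughAdd_le_iff.2 fun g h => comp_left (H g) h

theorem eq_of_forall_mem (hT : LinearMap.id ∈ homThroughAdd R L T T)
    (H : ∀ g : M →ₗ[R] L, g ∈ homThroughAdd R T M L) :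
    homThroughAdd R L M N = homThroughAdd R T M N :=
  le_antisymm (le_of_forall_mem H) (le_of_forall_mem (mem_of_id_mem_cod hT))

theorem eq_bot_of_forall_eq_zero (H : ∀ g : M →ₗ[R] T, g = 0) : homThroughAdd R T M N = ⊥ := by
  refine eq_bot_iff.2 (homThroughAdd_le_iff.2 fun g h => ?_)
  rw [H g, LinearMap.comp_zero, AddSubgroup.mem_bot]

theorem eq_zero_of_injective (H : ∀ g : M →ₗ[R] T, g = 0)
    (hQ : LinearMap.id ∈ homThroughAdd R T Q Q) {j : N →ₗ[R] Q} (hj : Function.Injective j)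
    (f : M →ₗ[R] N) : f = 0 := by
  have hjf : j ∘ₗ f ∈ homThroughAdd R T M Q := mem_of_id_mem_cod hQ _
  rw [eq_bot_of_forall_eq_zero H, AddSubgroup.mem_bot] at hjf
  exact (LinearMap.cancel_left hj).1 (hjf.trans (LinearMap.comp_zero j).symm)

theorem exists_lift [Module.Projective R T] {q : M →ₗ[R] N} (hq : Function.Surjective q)
    {f : L →ₗ[R] N} (hf : f ∈ homThroughAdd R T L N) : ∃ f' : L →ₗ[R] M, q ∘ₗ f' = f := by
  have h_le : homThroughAdd R T L N ≤ (LinearMap.compRight ℤ q).toAddMonoidHom.range :=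
    homThroughAdd_le_iff.2 fun g h => by
      obtain ⟨h', rfl⟩ := Module.projective_lifting_property q h hq
      exact ⟨h' ∘ₗ g, rfl⟩
  exact h_le hf

theorem exists_extend {i : W →ₗ[R] P} (hi : ∀ g : W →ₗ[R] T, ∃ g' : P →ₗ[R] T, g' ∘ₗ i = g)
    {f : W →ₗ[R] N} (hf : f ∈ homThroughAdd R T W N) : ∃ f' : P →ₗ[R] N, f' ∘ₗ i = f := by
  have h_le : homThroughAdd R T W N ≤ (LinearMap.lcomp ℤ N i).toAddMonoidHom.range :=
    homThroughAdd_le_iff.2 fun g h => by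
      obtain ⟨g', rfl⟩ := hi g
      exact ⟨h ∘ₗ g', rfl⟩
  exact h_le hf

end homThroughAdd

section ExactRows

variable {i : W →ₗ[R] P} {p : P →ₗ[R] K} {j : M →ₗ[R] Q} {q : Q →ₗ[R] L}
  {f : W →ₗ[R] M} {g : P →ₗ[R] Q} {h : K →ₗ[R] L}

theorem exists_comp_eq_of_exact_of_surjective (hip : Function.Exact i p)
    (hp : Function.Surjective p) {t : P →ₗ[R] N} (ht : t ∘ₗ i = 0) :
    ∃ t' : K →ₗ[R] N, t' ∘ₗ p = t := by
  refine ⟨(LinearMap.range i).liftQ t (LinearMap.range_le_ker_iff.2 ht) ∘ₗ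
    (hip.linearEquivOfSurjective hp).symm, LinearMap.ext fun x => ?_⟩
  simp [Function.Exact.linearEquivOfSurjective_symm_apply]

theorem exists_comp_eq_of_exact_of_injective (hjq : Function.Exact j q) (hj : Function.Injective j)
    {t : N →ₗ[R] Q} (ht : q ∘ₗ t = 0) : ∃ t' : N →ₗ[R] M, j ∘ₗ t' = t :=
  ⟨LinearMap.codLift t j hj fun x => (hjq _).1 (LinearMap.congr_fun ht x),
    LinearMap.comp_codLift ..⟩

theorem exists_hom_of_exact_left (hip : Function.Exact i p) (hp : Function.Surjective p)
    (hjq : Function.Exact j q) (hi : ∀ g : W →ₗ[R] T, ∃ g' : P →ₗ[R] T, g' ∘ₗ i = g)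
    (hQ : LinearMap.id ∈ homThroughAdd R T Q Q) (f : W →ₗ[R] M) :
    ∃ (g : P →ₗ[R] Q) (h : K →ₗ[R] L), g ∘ₗ i = j ∘ₗ f ∧ h ∘ₗ p = q ∘ₗ g := by
  obtain ⟨g, hg⟩ := homThroughAdd.exists_extend hi (homThroughAdd.mem_of_id_mem_cod hQ (j ∘ₗ f))
  have hqg : (q ∘ₗ g) ∘ₗ i = 0 := by
    rw [LinearMap.comp_assoc, hg, ← LinearMap.comp_assoc, hjq.linearMap_comp_eq_zero,
      LinearMap.zero_comp]
  obtain ⟨h, hh⟩ := exists_comp_eq_of_exact_of_surjective hip hp hqg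
  exact ⟨g, h, hg, hh⟩

theorem exists_hom_of_exact_right [Module.Projective R P] (hip : Function.Exact i p)
    (hjq : Function.Exact j q) (hj : Function.Injective j) (hq : Function.Surjective q)
    (h : K →ₗ[R] L) :
    ∃ (f : W →ₗ[R] M) (g : P →ₗ[R] Q), g ∘ₗ i = j ∘ₗ f ∧ h ∘ₗ p = q ∘ₗ g := by
  obtain ⟨g, hg⟩ := Module.projective_lifting_property q (h ∘ₗ p) hq
  have hqg : q ∘ₗ g ∘ₗ i = 0 := by
    rw [← LinearMap.comp_assoc, hg, LinearMap.comp_assoc, hip.linearMap_comp_eq_zero,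
      LinearMap.comp_zero]
  obtain ⟨f, hf⟩ := exists_comp_eq_of_exact_of_injective hjq hj hqg
  exact ⟨f, g, hf.symm, hg.symm⟩

theorem mem_homThroughAdd_left_of_right [Module.Projective R T]
    (hP : LinearMap.id ∈ homThroughAdd R T P P) (hip : Function.Exact i p)
    (hjq : Function.Exact j q) (hj : Function.Injective j) (hq : Function.Surjective q)
    (hgf : g ∘ₗ i = j ∘ₗ f) (hhg : h ∘ₗ p = q ∘ₗ g) (hh : h ∈ homThroughAdd R T K L) :
    f ∈ homThroughAdd R T W M := by
  obtain ⟨h', rfl⟩ := homThroughAdd.exists_lift hq hh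
  have hq0 : q ∘ₗ (g - h' ∘ₗ p) = 0 := by
    rw [LinearMap.comp_sub, ← hhg, LinearMap.comp_assoc, sub_self]
  obtain ⟨v, hv⟩ := exists_comp_eq_of_exact_of_injective hjq hj hq0
  have hf : f = v ∘ₗ i := by
    refine (LinearMap.cancel_left hj).1 ?_
    rw [← LinearMap.comp_assoc, hv, LinearMap.sub_comp, hgf, LinearMap.comp_assoc,
      hip.linearMap_comp_eq_zero, LinearMap.comp_zero, sub_zero]
  exact hf ▸ homThroughAdd.comp_mem_of_id_mem hP i v

theorem mem_homThroughAdd_right_of_left (hQ : LinearMap.id ∈ homThroughAdd R T Q Q)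
    (hi : ∀ g : W →ₗ[R] T, ∃ g' : P →ₗ[R] T, g' ∘ₗ i = g) (hip : Function.Exact i p)
    (hp : Function.Surjective p) (hjq : Function.Exact j q)
    (hgf : g ∘ₗ i = j ∘ₗ f) (hhg : h ∘ₗ p = q ∘ₗ g) (hf : f ∈ homThroughAdd R T W M) :
    h ∈ homThroughAdd R T K L := by
  obtain ⟨f', rfl⟩ := homThroughAdd.exists_extend hi hf
  have hi0 : (g - j ∘ₗ f') ∘ₗ i = 0 := by
    rw [LinearMap.sub_comp, hgf, LinearMap.comp_assoc, sub_self]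
  obtain ⟨v, hv⟩ := exists_comp_eq_of_exact_of_surjective hip hp hi0
  have hh : h = q ∘ₗ v := by
    refine (LinearMap.cancel_right hp).1 ?_
    rw [LinearMap.comp_assoc, hv, LinearMap.comp_sub, ← hhg, ← LinearMap.comp_assoc f',
      hjq.linearMap_comp_eq_zero, LinearMap.zero_comp, sub_zero]
  exact hh ▸ homThroughAdd.comp_mem_of_id_mem hQ v q

end ExactRows


section Ideal

theorem nonempty_quotient_ringEquiv_of_subring {A B : Type*} [Ring A] [Ring B]
    (S : Subring (A × B)) (I : TwoSidedIdeal A) (J : TwoSidedIdeal B)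
    (hA : ∀ a, ∃ b, (a, b) ∈ S) (hB : ∀ b, ∃ a, (a, b) ∈ S)
    (hIJ : ∀ {a b}, (a, b) ∈ S → (a ∈ I ↔ b ∈ J)) :
    Nonempty (I.ringCon.Quotient ≃+* J.ringCon.Quotient) := by
  let α : S →+* A := (RingHom.fst A B).comp S.subtype
  let β : S →+* B := (RingHom.snd A B).comp S.subtype
  have hα : Function.Surjective α := fun a => (hA a).elim fun b hab => ⟨⟨(a, b), hab⟩, rfl⟩
  have hβ : Function.Surjective β := fun b => (hB b).elim fun a hab => ⟨⟨(a, b), hab⟩, rfl⟩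
  have h_comap : I.comap α = J.comap β := by
    ext s
    simp only [TwoSidedIdeal.mem_comap]
    exact hIJ s.2
  exact ⟨(RingCon.comapQuotientEquivOfSurj I.ringCon α hα rfl).symm.trans
    (RingCon.comapQuotientEquivOfSurj J.ringCon β hβ (congrArg TwoSidedIdeal.ringCon h_comap))⟩

theorem nonempty_quotient_bot_ringEquiv (A : Type*) [Ring A] :
    Nonempty ((⊥ : TwoSidedIdeal A).ringCon.Quotient ≃+* A) :=
  ⟨RingCon.quotientKerEquivOfSurjective (RingHom.id A) Function.surjective_id⟩

variable (R T N) in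
/-- The two-sided ideal `[add T](N, N)` of the endomorphism ring of `N`. For `T = R` the quotient
is the stable endomorphism ring of `N`. -/
def endThroughAdd : TwoSidedIdeal (Module.End R N) :=
  TwoSidedIdeal.mk' (homThroughAdd R T N N) (zero_mem _) add_mem neg_mem
    (fun hg => homThroughAdd.comp_left hg _) (fun hf => homThroughAdd.comp_right hf _)

theorem mem_endThroughAdd {f : Module.End R N} :
    f ∈ endThroughAdd R T N ↔ f ∈ homThroughAdd R T N N :=
  TwoSidedIdeal.mem_mk' ..

theorem span_comp_eq_endThroughAdd {s : M →ₗ[R] N} {r : N →ₗ[R] M} (hrs : r ∘ₗ s = LinearMap.id) :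
    TwoSidedIdeal.span ({s ∘ₗ r} : Set (Module.End R N)) = endThroughAdd R M N := by
  refine le_antisymm (TwoSidedIdeal.span_le.2 ?_) fun f hf => ?_
  · rintro _ rfl
    exact mem_endThroughAdd.2 (comp_mem_homThroughAdd r s)
  · rw [mem_endThroughAdd] at hf
    induction hf using AddSubgroup.closure_induction with
    | mem f hf =>
      obtain ⟨g, h, rfl⟩ := hf
      have h_eq : h ∘ₗ g = (h ∘ₗ r) * (s ∘ₗ r) * (s ∘ₗ g) := calc
        h ∘ₗ g = h ∘ₗ (r ∘ₗ s) ∘ₗ (r ∘ₗ s) ∘ₗ g := by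
          simp only [hrs, LinearMap.id_comp]
        _ = (h ∘ₗ r) * (s ∘ₗ r) * (s ∘ₗ g) := rfl
      rw [h_eq]
      exact TwoSidedIdeal.mul_mem_right _ _ _
        (TwoSidedIdeal.mul_mem_left _ _ _ (TwoSidedIdeal.subset_span rfl))
    | zero => exact zero_mem _
    | add f g _ _ hf hg => exact add_mem hf hg
    | neg f _ hf => exact neg_mem hf

variable (T) in
/-- The ring of pairs of endomorphisms of `W` and `N` that agree along `s : W → N` modulo
`[add T]`. -/
def endPairs (s : W →ₗ[R] N) : Subring (Module.End R W × Module.End R N) where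
  carrier := {x | s ∘ₗ x.1 - x.2 ∘ₗ s ∈ homThroughAdd R T W N}
  mul_mem' {x y} hx hy := by
    have h_eq : s ∘ₗ (x * y).1 - (x * y).2 ∘ₗ s =
        (s ∘ₗ x.1 - x.2 ∘ₗ s) ∘ₗ y.1 + x.2 ∘ₗ (s ∘ₗ y.1 - y.2 ∘ₗ s) := by
      simp only [Prod.fst_mul, Prod.snd_mul, Module.End.mul_eq_comp, LinearMap.sub_comp,
        LinearMap.comp_sub, LinearMap.comp_assoc, sub_add_sub_cancel]
    rw [Set.mem_ofPred_eq, h_eq]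
    exact add_mem (homThroughAdd.comp_right hx _) (homThroughAdd.comp_left hy _)
  one_mem' := by
    simp only [Set.mem_ofPred_eq, Prod.fst_one, Prod.snd_one, Module.End.one_eq_id,
      LinearMap.comp_id, LinearMap.id_comp, sub_self, zero_mem]
  add_mem' hx hy := by
    simpa only [Set.mem_ofPred_eq, Prod.fst_add, Prod.snd_add, LinearMap.comp_add,
      LinearMap.add_comp, add_sub_add_comm] using add_mem hx hy
  zero_mem' := by
    simp only [Set.mem_ofPred_eq, Prod.fst_zero, Prod.snd_zero, LinearMap.comp_zero,
      LinearMap.zero_comp, sub_self, zero_mem]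
  neg_mem' hx := by
    simpa only [Set.mem_ofPred_eq, Prod.fst_neg, Prod.snd_neg, LinearMap.comp_neg,
      LinearMap.neg_comp, neg_sub_neg, neg_sub] using AddSubgroup.neg_mem (homThroughAdd R T W N) hx

theorem mem_endPairs {s : W →ₗ[R] N} {f : Module.End R W} {a : Module.End R N} :
    (f, a) ∈ endPairs T s ↔ s ∘ₗ f - a ∘ₗ s ∈ homThroughAdd R T W N :=
  Iff.rfl

theorem nonempty_quotient_endThroughAdd_ringEquiv_of_inverse {s : W →ₗ[R] N} {r : N →ₗ[R] W}
    (hrs : r ∘ₗ s - LinearMap.id ∈ homThroughAdd R T W W)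
    (hsr : s ∘ₗ r - LinearMap.id ∈ homThroughAdd R T N N) :
    Nonempty ((endThroughAdd R T W).ringCon.Quotient ≃+*
      (endThroughAdd R T N).ringCon.Quotient) := by
  refine nonempty_quotient_ringEquiv_of_subring (endPairs T s) _ _
    (fun f => ⟨s ∘ₗ f ∘ₗ r, ?_⟩) (fun a => ⟨r ∘ₗ a ∘ₗ s, ?_⟩) fun {f a} hfa => ?_
  · have h_mem := neg_mem (homThroughAdd.comp_left hrs (s ∘ₗ f))
    simpa only [mem_endPairs, LinearMap.comp_sub, LinearMap.comp_id, LinearMap.comp_assoc, neg_sub]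
      using h_mem
  · have h_mem := homThroughAdd.comp_right hsr (a ∘ₗ s)
    simpa only [mem_endPairs, LinearMap.sub_comp, LinearMap.id_comp, LinearMap.comp_assoc]
      using h_mem
  · rw [mem_endThroughAdd, mem_endThroughAdd]
    rw [mem_endPairs] at hfa
    constructor
    · intro hf
      have has : a ∘ₗ s ∈ homThroughAdd R T W N :=
        sub_sub_cancel (s ∘ₗ f) (a ∘ₗ s) ▸ sub_mem (homThroughAdd.comp_left hf s) hfa
      have h_eq : a = (a ∘ₗ s) ∘ₗ r - a ∘ₗ (s ∘ₗ r - LinearMap.id) := by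
        rw [LinearMap.comp_sub, LinearMap.comp_assoc, LinearMap.comp_id, sub_sub_cancel]
      exact h_eq ▸ sub_mem (homThroughAdd.comp_right has r) (homThroughAdd.comp_left hsr a)
    · intro ha
      have hsf : s ∘ₗ f ∈ homThroughAdd R T W N :=
        sub_add_cancel (s ∘ₗ f) (a ∘ₗ s) ▸ add_mem hfa (homThroughAdd.comp_right ha s)
      have h_eq : f = r ∘ₗ s ∘ₗ f - (r ∘ₗ s - LinearMap.id) ∘ₗ f := by
        rw [LinearMap.sub_comp, LinearMap.comp_assoc, LinearMap.id_comp, sub_sub_cancel]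
      exact h_eq ▸ sub_mem (homThroughAdd.comp_left hsf r) (homThroughAdd.comp_right hrs f)

variable (R M W) in
theorem nonempty_quotient_span_ringEquiv :
    Nonempty ((TwoSidedIdeal.span ({LinearMap.inl R M W ∘ₗ LinearMap.fst R M W} :
        Set (Module.End R (M × W)))).ringCon.Quotient ≃+*
      (endThroughAdd R M W).ringCon.Quotient) := by
  rw [span_comp_eq_endThroughAdd (LinearMap.fst_comp_inl R M W)]
  refine nonempty_quotient_endThroughAdd_ringEquiv_of_inverse (s := LinearMap.snd R M W)
    (r := LinearMap.inr R M W) ?_ ?_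
  · have h_eq : LinearMap.inr R M W ∘ₗ LinearMap.snd R M W - LinearMap.id =
        -(LinearMap.inl R M W ∘ₗ LinearMap.fst R M W) := by
      ext <;> simp
    exact h_eq ▸ neg_mem (comp_mem_homThroughAdd _ _)
  · rw [LinearMap.snd_comp_inr, sub_self]
    exact zero_mem _

/-- The ring of pairs of endomorphisms of the outer terms of a sequence `W → P → K` that are
induced by a common endomorphism of the middle term. -/
def endPairsOfRow (i : W →ₗ[R] P) (p : P →ₗ[R] K) :
    Subring (Module.End R W × Module.End R K) where
  carrier := {x | ∃ g : Module.End R P, g ∘ₗ i = i ∘ₗ x.1 ∧ x.2 ∘ₗ p = p ∘ₗ g}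
  mul_mem' := by
    rintro x y ⟨g, hgx, hxg⟩ ⟨g', hgy, hyg⟩
    refine ⟨g ∘ₗ g', ?_, ?_⟩
    · rw [LinearMap.comp_assoc, hgy, ← LinearMap.comp_assoc, hgx]; rfl
    · rw [← LinearMap.comp_assoc, ← hxg, LinearMap.comp_assoc, ← hyg]; rfl
  one_mem' := ⟨LinearMap.id, rfl, rfl⟩
  add_mem' := by
    rintro x y ⟨g, hgx, hxg⟩ ⟨g', hgy, hyg⟩
    refine ⟨g + g', ?_, ?_⟩
    · rw [LinearMap.add_comp, hgx, hgy, Prod.fst_add, LinearMap.comp_add]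
    · rw [LinearMap.comp_add, ← hxg, ← hyg, Prod.snd_add, LinearMap.add_comp]
  zero_mem' := ⟨0, by simp only [LinearMap.zero_comp, Prod.fst_zero, LinearMap.comp_zero],
    by simp only [LinearMap.zero_comp, Prod.snd_zero, LinearMap.comp_zero]⟩
  neg_mem' := by
    rintro x ⟨g, hgx, hxg⟩
    refine ⟨-g, ?_, ?_⟩
    · rw [LinearMap.neg_comp, hgx, Prod.fst_neg, LinearMap.comp_neg]
    · rw [LinearMap.comp_neg, ← hxg, Prod.snd_neg, LinearMap.neg_comp]

theorem nonempty_quotient_endThroughAdd_ringEquiv_of_exact [Module.Projective R P]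
    [Module.Projective R T] (hP : LinearMap.id ∈ homThroughAdd R T P P)
    {i : W →ₗ[R] P} {p : P →ₗ[R] K} (hi : Function.Injective i) (hp : Function.Surjective p)
    (hip : Function.Exact i p) (hext : ∀ g : W →ₗ[R] T, ∃ g' : P →ₗ[R] T, g' ∘ₗ i = g) :
    Nonempty ((endThroughAdd R T W).ringCon.Quotient ≃+*
      (endThroughAdd R T K).ringCon.Quotient) := by
  refine nonempty_quotient_ringEquiv_of_subring (endPairsOfRow i p) _ _
    (fun f => ?_) (fun h => ?_) fun {f h} => ?_
  · obtain ⟨g, h, hgf, hhg⟩ := exists_hom_of_exact_left hip hp hip hext hP f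
    exact ⟨h, g, hgf, hhg⟩
  · obtain ⟨f, g, hgf, hhg⟩ := exists_hom_of_exact_right hip hip hi hp h
    exact ⟨f, g, hgf, hhg⟩
  · rintro ⟨g, hgf, hhg⟩
    rw [mem_endThroughAdd, mem_endThroughAdd]
    exact ⟨mem_homThroughAdd_right_of_left hP hext hip hp hip hgf hhg,
      mem_homThroughAdd_left_of_right hP hip hip hi hp hgf hhg⟩

end Ideal

end HomThroughAdd

section Ext

variable {C : Type*} [Category* C] [Abelian C] [HasExt C]

theorem subsingleton_ext_congr_left {X X' : C} (e : X ≅ X') (Y : C) (n : ℕ) :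
    Subsingleton (Abelian.Ext X Y n) ↔ Subsingleton (Abelian.Ext X' Y n) :=
  have e_ext := ((Abelian.extFunctor n).mapIso e.symm.op).app Y
  e_ext.addCommGroupIsoToAddEquiv.toEquiv.subsingleton_congr

theorem exists_comp_eq_of_subsingleton_ext_one {S : ShortComplex C} (hS : S.ShortExact) {Y : C}
    (hY : Subsingleton (Abelian.Ext S.X₃ Y 1)) (g : S.X₁ ⟶ Y) : ∃ g' : S.X₂ ⟶ Y, S.f ≫ g' = g := by
  obtain ⟨x, hx⟩ := Abelian.Ext.contravariant_sequence_exact₁ hS Y (Abelian.Ext.mk₀ g)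
    (add_zero 1) (Subsingleton.elim _ _)
  obtain ⟨g', rfl⟩ := (Abelian.Ext.mk₀_bijective _ _).2 x
  rw [Abelian.Ext.mk₀_comp_mk₀] at hx
  exact ⟨g', (Abelian.Ext.mk₀_bijective _ _).1 hx⟩

theorem subsingleton_ext_of_shortExact {S : ShortComplex C} (hS : S.ShortExact)
    [Projective S.X₂] {Y : C} {n : ℕ} (hY : Subsingleton (Abelian.Ext S.X₃ Y (n + 2))) :
    Subsingleton (Abelian.Ext S.X₁ Y (n + 1)) := by
  refine subsingleton_of_forall_eq 0 fun x => ?_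
  obtain ⟨y, rfl⟩ := Abelian.Ext.contravariant_sequence_exact₁ hS Y x (add_comm 1 (n + 1))
    (Subsingleton.elim _ _)
  rw [Abelian.Ext.eq_zero_of_projective y, Abelian.Ext.comp_zero]

end Ext

section Syzygy

variable {R : Type u} [CommRing R]

namespace extZero

variable {n : ℕ} {X Y : ModuleCat.{u} R}

theorem exactAt_linearYonedaObj (h : extZero R n X Y) (P : ProjectiveResolution X) :
    (P.complex.linearYonedaObj R Y).ExactAt n := by
  rw [HomologicalComplex.exactAt_iff_isZero_homology]
  exact ((ModuleCat.isZero_iff_subsingleton).2 h).of_iso (P.isoExt n Y).symm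

theorem subsingleton_ext (h : extZero R n X Y) : Subsingleton (Abelian.Ext X Y n) := by
  let P := projectiveResolution X
  have h_exact := h.exactAt_linearYonedaObj P
  refine subsingleton_of_forall_eq 0 fun x => ?_
  obtain ⟨f, hf, rfl⟩ := P.extMk_surjective x (n + 1) rfl
  cases n with
  | zero =>
    rw [HomologicalComplex.exactAt_iff' _ 0 0 1 (by simp) (by simp),
      ShortComplex.moduleCat_exact_iff] at h_exact
    obtain ⟨g, hg⟩ := h_exact f hf
    -- There is no differential into degree `0`; by convention it is `d 0 0`, which is zero.
    have h_d : (P.complex.linearYonedaObj R Y).d 0 0 = 0 :=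
      HomologicalComplex.shape _ _ _ (by simp)
    have hf_zero : f = 0 := hg.symm.trans (ConcreteCategory.congr_hom h_d g)
    subst hf_zero
    exact P.extMk_zero _ _
  | succ n =>
    rw [HomologicalComplex.exactAt_iff' _ n (n + 1) (n + 2) (by simp) (by simp),
      ShortComplex.moduleCat_exact_iff] at h_exact
    obtain ⟨g, hg⟩ := h_exact f hf
    exact (P.extMk_eq_zero_iff f _ _ hf n rfl).2 ⟨g, hg⟩

theorem linearMap_eq_zero (h : extZero R 0 X Y) (f : X →ₗ[R] Y) : f = 0 := by
  have := h.subsingleton_ext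
  have h_zero : ModuleCat.ofHom f = 0 :=
    (Abelian.Ext.mk₀_bijective X Y).1 (Subsingleton.elim _ _)
  exact congrArg ModuleCat.Hom.hom h_zero

end extZero

namespace IsSyzygy

variable {n : ℕ} {W P K X : ModuleCat.{u} R}

theorem exists_exact (h : IsSyzygy R (n + 1) W X) :
    ∃ (P K : ModuleCat.{u} R) (i : W →ₗ[R] P) (p : P →ₗ[R] K),
      Module.Projective R P ∧ Module.Finite R P ∧ Function.Injective i ∧
      Function.Surjective p ∧ Function.Exact i p ∧ IsSyzygy R n K X := by
  obtain ⟨P, K, i, p, hP, hP_fin, hi, hp, hip, hK⟩ := h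
  exact ⟨P, K, i.hom, p.hom, (IsProjective.iff_projective P).2 hP, hP_fin, hi, hp, hip, hK⟩

theorem subsingleton_ext (hW : IsSyzygy R n W X) {Y : ModuleCat.{u} R} {m : ℕ}
    (h : Subsingleton (Abelian.Ext X Y (n + m + 1))) :
    Subsingleton (Abelian.Ext W Y (m + 1)) := by
  induction n generalizing W m with
  | zero =>
    obtain ⟨e⟩ := hW
    rw [Nat.zero_add] at h
    exact (subsingleton_ext_congr_left e Y _).2 h
  | succ n ih =>
    obtain ⟨P, K, i, p, hP, -, hi, hp, hip, hK⟩ := hW.exists_exact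
    have hS := ModuleCat.shortComplex_shortExact
      (ModuleCat.shortComplexOfCompEqZero i p hip.linearMap_comp_eq_zero) hip hi hp
    have : Projective (ModuleCat.of R P) := (IsProjective.iff_projective P).1 hP
    refine subsingleton_ext_of_shortExact hS (ih hK ?_)
    rwa [← add_assoc, add_right_comm n m 1]

theorem exists_extend (hK : IsSyzygy R n K X) {Y : ModuleCat.{u} R} (h : extZero R (n + 1) X Y)
    {i : W →ₗ[R] P} {p : P →ₗ[R] K} (hi : Function.Injective i) (hp : Function.Surjective p)
    (hip : Function.Exact i p) (g : W →ₗ[R] Y) : ∃ g' : P →ₗ[R] Y, g' ∘ₗ i = g := by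
  have hS := ModuleCat.shortComplex_shortExact
    (ModuleCat.shortComplexOfCompEqZero i p hip.linearMap_comp_eq_zero) hip hi hp
  obtain ⟨g', hg'⟩ := exists_comp_eq_of_subsingleton_ext_one hS
    (hK.subsingleton_ext (m := 0) h.subsingleton_ext) (ModuleCat.ofHom g)
  exact ⟨g'.hom, congrArg ModuleCat.Hom.hom hg'⟩

theorem nonempty_stableEnd_ringEquiv (hW : IsSyzygy R n W X)
    (h : ∀ i, 1 ≤ i → i ≤ n → extZero R i X (ModuleCat.of R R)) :
    Nonempty ((endThroughAdd R R W).ringCon.Quotient ≃+*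
      (endThroughAdd R R X).ringCon.Quotient) := by
  induction n generalizing W with
  | zero =>
    obtain ⟨e⟩ := hW
    refine nonempty_quotient_endThroughAdd_ringEquiv_of_inverse
      (s := e.toLinearEquiv.toLinearMap) (r := e.toLinearEquiv.symm.toLinearMap) ?_ ?_
    · rw [LinearEquiv.symm_comp, sub_self]; exact zero_mem _
    · rw [LinearEquiv.comp_symm, sub_self]; exact zero_mem _
  | succ n ih =>
    obtain ⟨P, K, i, p, _, _, hi, hp, hip, hK⟩ := hW.exists_exact
    obtain ⟨e⟩ := nonempty_quotient_endThroughAdd_ringEquiv_of_exact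
      homThroughAdd.id_mem_of_projective hi hp hip
      (hK.exists_extend (h (n + 1) le_add_self le_rfl) hi hp hip)
    obtain ⟨e'⟩ := ih hK fun j hj hjn => h j hj (hjn.trans n.le_succ)
    exact ⟨e.trans e'⟩

theorem mem_homThroughAdd {d : ℕ} {M N : ModuleCat.{u} R} (hW : IsSyzygy R n W X)
    (hM : IsSyzygy R d M N) (hnd : n < d) (h : ∀ i ≤ n, extZero R i X (ModuleCat.of R R))
    (f : W →ₗ[R] M) : f ∈ homThroughAdd R R W M := by
  induction n generalizing d W M with
  | zero =>
    obtain ⟨d, rfl⟩ := Nat.exists_eq_add_one.2 hnd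
    obtain ⟨e⟩ := hW
    obtain ⟨Q, L, j, q, _, _, hj, -⟩ := hM.exists_exact
    have h_zero : f ∘ₗ e.toLinearEquiv.symm.toLinearMap = 0 :=
      homThroughAdd.eq_zero_of_injective (h 0 le_rfl).linearMap_eq_zero
        homThroughAdd.id_mem_of_projective hj _
    have hf_zero : f = 0 := by
      rwa [← LinearMap.zero_comp e.toLinearEquiv.symm.toLinearMap,
        LinearMap.cancel_right e.toLinearEquiv.symm.surjective] at h_zero
    exact hf_zero ▸ zero_mem _
  | succ n ih =>
    obtain ⟨d, rfl⟩ := Nat.exists_eq_add_one.2 (Nat.zero_lt_of_lt hnd)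
    obtain ⟨P, K, i, p, _, _, hi, hp, hip, hK⟩ := hW.exists_exact
    obtain ⟨Q, L, j, q, _, _, hj, hq, hjq, hL⟩ := hM.exists_exact
    obtain ⟨g, k, hgf, hkg⟩ := exists_hom_of_exact_left hip hp hjq
      (hK.exists_extend (h (n + 1) le_rfl) hi hp hip) homThroughAdd.id_mem_of_projective f
    have hk : k ∈ homThroughAdd R R K L :=
      ih hK hL (Nat.succ_lt_succ_iff.1 hnd) (fun i hin => h i (hin.trans n.le_succ)) k
    exact mem_homThroughAdd_left_of_right homThroughAdd.id_mem_of_projective hip hjq hj hq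
      hgf hkg hk

end IsSyzygy

theorem MemAdd.id_mem_homThroughAdd {M N : ModuleCat.{u} R} (h : MemAdd R M N) :
    LinearMap.id ∈ homThroughAdd R M N N := by
  obtain ⟨k, i, p, hpi⟩ := h
  exact hpi ▸ homThroughAdd.comp_pi_mem i p

end Syzygy

theorem stmt9_general (R : Type u) [CommRing R] (d c : ℕ) (hcd : c < d)
    (M X N : ModuleCat.{u} R) (hM : IsSyzygy R d M N)
    (hgen : MemAdd R M (ModuleCat.of R R))
    (hgrade : ∀ i ≤ c, extZero R i X (ModuleCat.of R R))
    (W : ModuleCat.{u} R) (hW : IsSyzygy R c W X) :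
    Nonempty
      ((TwoSidedIdeal.span
          ({(LinearMap.inl R M W).comp (LinearMap.fst R M W)} :
            Set (Module.End R (M × W)))).ringCon.Quotient
        ≃+* Module.End R X) := by
  have h_add : endThroughAdd R M W = endThroughAdd R R W := by
    ext f
    rw [mem_endThroughAdd, mem_endThroughAdd,
      homThroughAdd.eq_of_forall_mem hgen.id_mem_homThroughAdd (hW.mem_homThroughAdd hM hcd hgrade)]
  have h_bot : endThroughAdd R R X = ⊥ := by
    ext f
    rw [mem_endThroughAdd,
      homThroughAdd.eq_bot_of_forall_eq_zero (hgrade 0 c.zero_le).linearMap_eq_zero,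
      AddSubgroup.mem_bot, TwoSidedIdeal.mem_bot]
  obtain ⟨e₁⟩ := nonempty_quotient_span_ringEquiv R M W
  obtain ⟨e₂⟩ := hW.nonempty_stableEnd_ringEquiv fun i _ hi => hgrade i hi
  obtain ⟨e₃⟩ := nonempty_quotient_bot_ringEquiv (Module.End R X)
  rw [h_add] at e₁
  rw [h_bot] at e₂
  exact ⟨e₁.trans (e₂.trans e₃)⟩

/-- With `A = End_R(M ⊕ Ω^c X)` and `e` the idempotent projecting onto `M`,
`A/AeA ≅ End_R(X)` as rings. -/
theorem stmt9 (R : Type u) [CommRing R] [IsNoetherianRing R] (d c : ℕ) (hcd : c < d)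
    (M X : ModuleCat.{u} R) [Module.Finite R M] [Module.Finite R X]
    (hM : IsTorsionFree R d M)
    (hgen : MemAdd R M (ModuleCat.of R R))
    (hgrade : ∀ i ≤ c, extZero R i X (ModuleCat.of R R))
    (W : ModuleCat.{u} R) (hW : IsSyzygy R c W X) :
    Nonempty
      ((TwoSidedIdeal.span
          ({(LinearMap.inl R M W).comp (LinearMap.fst R M W)} :
            Set (Module.End R (M × W)))).ringCon.Quotient
        ≃+* Module.End R X) := by
  obtain ⟨N, -, -, hN⟩ := hM
  exact stmt9_general R d c hcd M X N hN hgen hgrade W hW
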